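/- arXiv:1106.0930 — 3 statements merged into one kernel-verified Lean document; each statement's English description precedes it below -/
import Mathlib

section
/- Let m be a positive integer, let L_m = E_{10}/mE_{10}, regarded as a module over ℤ/mℤ, and let V ⊆ L_m be a ℤ/mℤ-submodule that contains a submodule isomorphic as a ℤ/mℤ-module to (ℤ/mℤ)^8. Then there exists a root α ∈ E_{10} (i.e. α ∈ E_{10} with ⟨α,α⟩ = −2) whose image under the quotient map E_{10} → E_{10}/mE_{10} lies in V. -/
/-- The standard bilinear form on `ℤ^{1,n}`: `⟨x,y⟩ = x₀y₀ - ∑_{i=1}^n xᵢyᵢ`. -/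
def B {n : ℕ} (x y : Fin (n + 1) → ℤ) : ℤ :=
  x 0 * y 0 - ∑ i : Fin n, x i.succ * y i.succ

/-- The vector `k_n = -3e₀ + (e₁ + ⋯ + e_n)`. -/
def kv (n : ℕ) : Fin (n + 1) → ℤ := fun j => if j = 0 then -3 else 1

/-- The lattice `E_n = k_n^⊥` as a submodule of `ℤ^{1,n}`. -/
def En (n : ℕ) : Submodule ℤ (Fin (n + 1) → ℤ) where
  carrier := {x | B x (kv n) = 0}
  zero_mem' := by simp [B]
  add_mem' := by
    intro a b ha hb
    simp only [Set.mem_setOf_eq, B, Pi.add_apply, add_mul] at ha hb ⊢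
    rw [Finset.sum_add_distrib]
    linarith
  smul_mem' := by
    intro c x hx
    simp only [Set.mem_setOf_eq, B, Pi.smul_apply, smul_eq_mul, mul_assoc] at hx ⊢
    rw [← Finset.mul_sum, ← mul_sub, hx, mul_zero]

/-- The submodule `m·E₁₀` of `E₁₀`. -/
def mE (m : ℕ) : Submodule ℤ (En 10) :=
  LinearMap.range ((m : ℤ) • (LinearMap.id : En 10 →ₗ[ℤ] En 10))


/-- upper triangular Gram matrix of `-⟨x,x⟩/2` on `E₈` -/
def Gm (i j : Fin 8) : ℤ :=
  if i = 0 ∧ j = 0 then 4 else if i = 0 then 3 else if i ≤ j then 1 else if j = 0 then 0 else 0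

def qq {R : Type*} [CommRing R] (c : Fin 8 → R) : R := ∑ i, ∑ j, (Gm i j : R) * (c i * c j)

def bb {R : Type*} [CommRing R] (c d : Fin 8 → R) : R :=
  ∑ i, ∑ j, (Gm i j : R) * (c i * d j + d i * c j)

lemma qq_add {R : Type*} [CommRing R] (c d : Fin 8 → R) : qq (c + d) = qq c + bb c d + qq d := by
  simp only [qq, bb, ← Finset.sum_add_distrib, Pi.add_apply]
  refine Finset.sum_congr rfl fun i _ => Finset.sum_congr rfl fun j _ => ?_
  ring

lemma qq_smul {R : Type*} [CommRing R] (r : R) (c : Fin 8 → R) : qq (r • c) = r ^ 2 * qq c := by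
  simp only [qq, Finset.mul_sum, Pi.smul_apply, smul_eq_mul]
  refine Finset.sum_congr rfl fun i _ => Finset.sum_congr rfl fun j _ => ?_
  ring

lemma bb_comm {R : Type*} [CommRing R] (c d : Fin 8 → R) : bb c d = bb d c := by
  simp only [bb]
  refine Finset.sum_congr rfl fun i _ => Finset.sum_congr rfl fun j _ => ?_
  ring

lemma bb_add_right {R : Type*} [CommRing R] (c d e : Fin 8 → R) :
    bb c (d + e) = bb c d + bb c e := by
  simp only [bb, ← Finset.sum_add_distrib, Pi.add_apply]
  refine Finset.sum_congr rfl fun i _ => Finset.sum_congr rfl fun j _ => ?_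
  ring

lemma bb_smul_right {R : Type*} [CommRing R] (r : R) (c d : Fin 8 → R) :
    bb c (r • d) = r * bb c d := by
  simp only [bb, Finset.mul_sum, Pi.smul_apply, smul_eq_mul]
  refine Finset.sum_congr rfl fun i _ => Finset.sum_congr rfl fun j _ => ?_
  ring

lemma bb_add_left {R : Type*} [CommRing R] (c d e : Fin 8 → R) :
    bb (c + d) e = bb c e + bb d e := by
  rw [bb_comm, bb_add_right, bb_comm e c, bb_comm e d]

lemma bb_smul_left {R : Type*} [CommRing R] (r : R) (c d : Fin 8 → R) :
    bb (r • c) d = r * bb c d := by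
  rw [bb_comm, bb_smul_right, bb_comm]

lemma bb_self {R : Type*} [CommRing R] (c : Fin 8 → R) : bb c c = 2 * qq c := by
  simp only [bb, qq, Finset.mul_sum]
  refine Finset.sum_congr rfl fun i _ => Finset.sum_congr rfl fun j _ => ?_
  ring

lemma qq_map {R S : Type*} [CommRing R] [CommRing S] (g : R →+* S) (c : Fin 8 → R) :
    qq (fun i => g (c i)) = g (qq c) := by
  simp [qq]

lemma bb_map {R S : Type*} [CommRing R] [CommRing S] (g : R →+* S) (c d : Fin 8 → R) :
    bb (fun i => g (c i)) (fun i => g (d i)) = g (bb c d) := by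
  simp [bb]

/-- values of the form as an explicit polynomial -/
lemma qq_eq (c : Fin 8 → ℤ) : 2 * qq c = - (c 0) ^ 2 + (c 1) ^ 2 + (c 2) ^ 2 + (c 3) ^ 2 + (c 4) ^ 2
    + (c 5) ^ 2 + (c 6) ^ 2 + (c 7) ^ 2
    + (3 * c 0 + c 1 + c 2 + c 3 + c 4 + c 5 + c 6 + c 7) ^ 2 := by
  simp only [qq, Fin.sum_univ_succ, Gm]
  simp [Fin.ext_iff, Fin.le_def]
  ring

lemma bb_expand {R : Type*} [CommRing R] (c d : Fin 8 → R) : bb c d =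
    - (c 0) * d 0 + (c 1) * d 1 + (c 2) * d 2 + (c 3) * d 3 + (c 4) * d 4
    + (c 5) * d 5 + (c 6) * d 6 + (c 7) * d 7
    + (3 * c 0 + c 1 + c 2 + c 3 + c 4 + c 5 + c 6 + c 7) *
      (3 * d 0 + d 1 + d 2 + d 3 + d 4 + d 5 + d 6 + d 7) := by
  simp only [bb, Fin.sum_univ_succ, Gm]
  simp [Fin.ext_iff, Fin.le_def]
  ring

def Bf (F : Type*) [CommRing F] : LinearMap.BilinForm F (Fin 8 → F) :=
  LinearMap.mk₂ F bb bb_add_left bb_smul_left bb_add_right bb_smul_right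

lemma hensel (p : ℕ) (hp : p.Prime) (a b c : ℤ) (hb : ¬ (p : ℤ) ∣ b) (j : ℕ) :
    ∃ y : ℤ, (p : ℤ) ^ j ∣ a + b * y + p * c * y ^ 2 := by
  have hcop : IsCoprime b (p : ℤ) :=
    ((Nat.prime_iff_prime_int.mp hp).coprime_iff_not_dvd.mpr hb).symm
  obtain ⟨u, v, huv⟩ := hcop
  induction j with
  | zero => exact ⟨0, by simp⟩
  | succ j ih =>
    obtain ⟨y, r, hr⟩ := ih
    refine ⟨y + p ^ j * (-r * u), r * v + c * (2 * y * (-r * u) + p ^ j * (r * u) ^ 2), ?_⟩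
    linear_combination hr - p ^ j * r * huv

lemma isotropic (F : Type) [Field F] [Fintype F] (C : Submodule F (Fin 8 → F))
    (hC : 3 ≤ Module.finrank F C) : ∃ x ∈ C, x ≠ 0 ∧ qq x = 0 := by
  classical
  obtain ⟨p, hp⟩ := CharP.exists F
  let b := Module.finBasis F C
  let n := Module.finrank F C
  let L : Fin 8 → MvPolynomial (Fin n) F := fun i =>
    ∑ k, MvPolynomial.C ((b k : Fin 8 → F) i) * MvPolynomial.X k
  have hL : ∀ i, (L i).IsHomogeneous 1 := fun i =>
    MvPolynomial.IsHomogeneous.sum _ _ _ fun k _ => by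
      simpa using (MvPolynomial.isHomogeneous_C (Fin n) ((b k : Fin 8 → F) i)).mul
        (MvPolynomial.isHomogeneous_X F k)
  have hq : (qq L).IsHomogeneous 2 := by
    refine MvPolynomial.IsHomogeneous.sum _ _ _ fun i _ =>
      MvPolynomial.IsHomogeneous.sum _ _ _ fun j _ => ?_
    have h1 := (MvPolynomial.isHomogeneous_C (Fin n) ((Gm i j : ℤ) : F)).mul ((hL i).mul (hL j))
    simpa using h1
  have hev : ∀ y : Fin n → F, MvPolynomial.eval y (qq L) =
      qq ((∑ k, y k • b k : C) : Fin 8 → F) := by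
    intro y
    rw [← qq_map]
    congr 1
    funext i
    simp [L, mul_comm]
    rfl
  have hdvd := char_dvd_card_solutions (K := F) (σ := Fin n) p (f := qq L)
    (lt_of_le_of_lt hq.totalDegree_le (by simp; omega))
  have hpp : 1 < p := (CharP.char_is_prime F p).one_lt
  have h0 : MvPolynomial.eval (0 : Fin n → F) (qq L) = 0 := by
    rw [hev]; simp [qq]
  have : Nonempty {x : Fin n → F // MvPolynomial.eval x (qq L) = 0} := ⟨⟨0, h0⟩⟩
  have hc : 1 < Fintype.card {x : Fin n → F // MvPolynomial.eval x (qq L) = 0} :=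
    lt_of_lt_of_le hpp (Nat.le_of_dvd Fintype.card_pos hdvd)
  obtain ⟨⟨y, hy⟩, hne⟩ := Fintype.exists_ne_of_one_lt_card hc ⟨0, h0⟩
  refine ⟨((∑ k, y k • b k : C) : Fin 8 → F), (∑ k, y k • b k : C).2, ?_, by rw [← hev, hy]⟩
  intro h
  apply hne
  have h2 : (∑ k, y k • b k : C) = 0 := Subtype.ext h
  have := Fintype.linearIndependent_iff.mp b.linearIndependent y h2
  exact Subtype.ext (funext this)

lemma Bf_sep (F : Type) [CommRing F] (c : Fin 8 → F) (h : ∀ d, bb c d = 0) : c = 0 := by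
  have h0 := h (Pi.single 0 1)
  have h1 := h (Pi.single 1 1)
  have h2 := h (Pi.single 2 1)
  have h3 := h (Pi.single 3 1)
  have h4 := h (Pi.single 4 1)
  have h5 := h (Pi.single 5 1)
  have h6 := h (Pi.single 6 1)
  have h7 := h (Pi.single 7 1)
  rw [bb_expand] at h0 h1 h2 h3 h4 h5 h6 h7
  simp at h0 h1 h2 h3 h4 h5 h6 h7
  have hs : 3 * c 0 + c 1 + c 2 + c 3 + c 4 + c 5 + c 6 + c 7 = 0 := by
    linear_combination 3 * h0 - h1 - h2 - h3 - h4 - h5 - h6 - h7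
  rw [hs] at h0 h1 h2 h3 h4 h5 h6 h7
  funext i
  fin_cases i <;> simp_all

lemma field_step (F : Type) [Field F] [Fintype F] (W : Submodule F (Fin 8 → F))
    (hW : 6 ≤ Module.finrank F W) : ∃ z ∈ W, ∃ x ∈ W, qq z = 1 ∧ bb z x = 1 := by
  have hrefl : (Bf F).IsRefl := fun x y h => by
    have : bb x y = 0 := h
    change bb y x = 0
    rw [bb_comm, this]
  have hnd : (Bf F).Nondegenerate := by
    constructor
    · intro x hx; exact Bf_sep F x hx
    · intro x hx; exact Bf_sep F x fun d => by rw [bb_comm]; exact hx d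
  have ho := LinearMap.BilinForm.finrank_orthogonal hnd W
  rw [Module.finrank_fin_fun] at ho
  obtain ⟨C', hC'⟩ := Submodule.exists_isCompl ((Bf F).orthogonal W)
  have hsum := Submodule.finrank_add_eq_of_isCompl hC'
  rw [Module.finrank_fin_fun] at hsum
  have hinf := Submodule.finrank_sup_add_finrank_inf_eq C' W
  have hle := Submodule.finrank_le (C' ⊔ W)
  rw [Module.finrank_fin_fun] at hle
  obtain ⟨x, hx, hx0, hq⟩ := isotropic F (C' ⊓ W) (by omega)
  have hxo : x ∉ (Bf F).orthogonal W := fun h => hx0 (by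
    have := hC'.disjoint.le_bot ⟨h, hx.1⟩
    simpa using this)
  rw [LinearMap.BilinForm.mem_orthogonal_iff] at hxo
  push Not at hxo
  obtain ⟨y, hy, hyx⟩ := hxo
  have hyx : bb y x ≠ 0 := hyx
  have hxx : bb x x = 0 := by rw [bb_self, hq, mul_zero]
  refine ⟨(bb y x)⁻¹ • y + (1 - qq ((bb y x)⁻¹ • y)) • x,
    W.add_mem (W.smul_mem _ hy) (W.smul_mem _ hx.2), x, hx.2, ?_, ?_⟩
  · rw [qq_add, qq_smul _ x, hq, bb_smul_right, bb_smul_left, inv_mul_cancel₀ hyx]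
    ring
  · rw [bb_add_left, bb_smul_left, bb_smul_left, hxx, inv_mul_cancel₀ hyx]
    ring

abbrev XX := (Fin 8 → ℤ) × ℤ × ℤ

/-- mod `p` step -/
lemma modp_step (p : ℕ) (hp : p.Prime) (w : Fin 8 → XX)
    (hw : ∀ c : Fin 8 → ℤ, (∃ y : XX, ∑ i, c i • w i = (p : ℤ) • y) → ∀ i, (p : ℤ) ∣ c i) :
    ∃ a b : Fin 8 → ℤ, (p : ℤ) ∣ (∑ i, a i • w i).2.1 ∧ (p : ℤ) ∣ (∑ i, a i • w i).2.2 ∧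
      (p : ℤ) ∣ (∑ i, b i • w i).2.1 ∧ (p : ℤ) ∣ (∑ i, b i • w i).2.2 ∧
      (p : ℤ) ∣ qq (∑ i, a i • w i).1 - 1 ∧
      (p : ℤ) ∣ bb (∑ i, a i • w i).1 (∑ i, b i • w i).1 - 1 := by
  have : Fact p.Prime := ⟨hp⟩
  let F := ZMod p
  let red : ℤ →+* F := Int.castRingHom F
  let φc : (Fin 8 → F) →ₗ[F] (Fin 8 → F) :=
    Fintype.linearCombination F (fun i j => red ((w i).1 j))
  let φs : (Fin 8 → F) →ₗ[F] F × F :=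
    Fintype.linearCombination F (fun i => (red (w i).2.1, red (w i).2.2))
  have hc : ∀ a : Fin 8 → ℤ, φc (fun i => red (a i)) = fun j => red ((∑ i, a i • w i).1 j) := by
    intro a; funext j
    simp [φc, Fintype.linearCombination_apply, Prod.fst_sum]
  have hs : ∀ a : Fin 8 → ℤ, φs (fun i => red (a i)) =
      (red (∑ i, a i • w i).2.1, red (∑ i, a i • w i).2.2) := by
    intro a
    ext <;> simp [φs, Fintype.linearCombination_apply, Prod.fst_sum, Prod.snd_sum]
  have hlift : ∀ a : Fin 8 → F, ∃ a' : Fin 8 → ℤ, (fun i => red (a' i)) = a := fun a =>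
    ⟨fun i => (ZMod.intCast_surjective (a i)).choose,
      funext fun i => (ZMod.intCast_surjective (a i)).choose_spec⟩
  have hdv : ∀ k : ℤ, red k = 0 ↔ (p : ℤ) ∣ k := fun k => ZMod.intCast_zmod_eq_zero_iff_dvd k p
  have hinj : ∀ a, φs a = 0 → φc a = 0 → a = 0 := by
    intro a h1 h2
    obtain ⟨a, rfl⟩ := hlift a
    rw [hs] at h1
    rw [hc] at h2
    simp only [Prod.mk_eq_zero, hdv] at h1
    have h3 : ∀ j, (p : ℤ) ∣ (∑ i, a i • w i).1 j := fun j => (hdv _).mp (congrFun h2 j)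
    choose y hy using h3
    obtain ⟨⟨s, hs⟩, ⟨t, ht⟩⟩ := h1
    have := hw a ⟨(y, s, t), by
      ext j
      · rw [hy]; rfl
      · rw [hs]; rfl
      · rw [ht]; rfl⟩
    funext i
    exact (hdv _).mpr (this i)
  have hK : 6 ≤ Module.finrank F (LinearMap.ker φs) := by
    have h1 := LinearMap.finrank_range_add_finrank_ker φs
    have h2 := Submodule.finrank_le (LinearMap.range φs)
    simp only [Module.finrank_fin_fun, Module.finrank_prod, Module.finrank_self] at h1 h2
    omega
  let ψ := φc.domRestrict (LinearMap.ker φs)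
  have hψ : Function.Injective ψ := by
    rw [← LinearMap.ker_eq_bot, LinearMap.ker_eq_bot']
    rintro ⟨a, ha⟩ h
    exact Subtype.ext (hinj a ha h)
  have hW : 6 ≤ Module.finrank F (LinearMap.range ψ) := by
    rw [LinearMap.finrank_range_of_inj hψ]; exact hK
  obtain ⟨_, ⟨⟨a, ha⟩, rfl⟩, _, ⟨⟨b, hb⟩, rfl⟩, h1, h2⟩ := field_step F _ hW
  obtain ⟨a, rfl⟩ := hlift a
  obtain ⟨b, rfl⟩ := hlift b
  rw [LinearMap.mem_ker, hs] at ha hb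
  change qq (φc (fun i => red (a i))) = 1 at h1
  change bb (φc (fun i => red (a i))) (φc (fun i => red (b i))) = 1 at h2
  rw [hc, qq_map] at h1
  rw [hc, hc, bb_map] at h2
  simp only [Prod.mk_eq_zero, hdv] at ha hb
  refine ⟨a, b, ha.1, ha.2, hb.1, hb.2, ?_, ?_⟩
  · rw [← hdv, map_sub, h1]; simp
  · rw [← hdv, map_sub, h2]; simp

def QX (x : XX) : ℤ := qq x.1 - x.2.1 * x.2.2

def BX (x y : XX) : ℤ := bb x.1 y.1 - x.2.1 * y.2.2 - y.2.1 * x.2.2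

lemma QX_add_smul (x y : XX) (r : ℤ) :
    QX (x + r • y) = QX x + r * BX x y + r ^ 2 * QX y := by
  simp only [QX, BX, Prod.fst_add, Prod.snd_add, Prod.smul_fst, Prod.smul_snd, qq_add, qq_smul,
    bb_smul_right, smul_eq_mul]
  ring

lemma local_step (p k : ℕ) (hp : p.Prime) (H : Submodule ℤ XX) (w : Fin 8 → XX)
    (hwH : ∀ i, w i ∈ H)
    (hw : ∀ c : Fin 8 → ℤ, (∃ y : XX, ∑ i, c i • w i = (p : ℤ) • y) → ∀ i, (p : ℤ) ∣ c i) :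
    ∃ x ∈ H, ((p ^ k : ℕ) : ℤ) ∣ QX x - 1 ∧ ∃ u, ((p ^ k : ℕ) : ℤ) ∣ bb x.1 u - 1 := by
  obtain ⟨a, b, h1, h2, h3, h4, h5, h6⟩ := modp_step p hp w hw
  have hpp : Prime (p : ℤ) := Nat.prime_iff_prime_int.mp hp
  set z := ∑ i, a i • w i with hz
  set x := ∑ i, b i • w i with hx
  have hzH : z ∈ H := H.sum_mem fun i _ => H.smul_mem _ (hwH i)
  have hxH : x ∈ H := H.sum_mem fun i _ => H.smul_mem _ (hwH i)
  clear_value z x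
  obtain ⟨s, hs⟩ := h1
  obtain ⟨t, ht⟩ := h2
  obtain ⟨s', hs'⟩ := h3
  obtain ⟨t', ht'⟩ := h4
  obtain ⟨g, hg⟩ := h5
  obtain ⟨l, hl⟩ := h6
  have hone : ¬ (p : ℤ) ∣ 1 := fun h => hpp.not_isUnit (isUnit_of_dvd_one h)
  have hB : ¬ (p : ℤ) ∣ BX z x := by
    rintro ⟨d, hd⟩
    apply hone
    refine ⟨d - l + p * s * t' + p * s' * t, ?_⟩
    rw [BX, hs, ht, hs', ht'] at hd
    linear_combination hd - hl
  have hQ : QX z - 1 = p * (g - p * s * t) := by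
    rw [QX, hs, ht]
    linear_combination hg
  obtain ⟨μ, r, hr⟩ := hensel p hp (g - p * s * t) (BX z x) (QX x) hB k
  refine ⟨z + ((p : ℤ) * μ) • x, H.add_mem hzH (H.smul_mem _ hxH), ⟨p * r, ?_⟩, ?_⟩
  · rw [QX_add_smul]
    push_cast
    linear_combination hQ + p * hr
  · have hnd : ¬ (p : ℤ) ∣ bb (z + ((p : ℤ) * μ) • x).1 x.1 := by
      rintro ⟨d, hd⟩
      apply hone
      refine ⟨d - l - μ * bb x.1 x.1, ?_⟩
      rw [Prod.fst_add, Prod.smul_fst, bb_add_left, bb_smul_left] at hd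
      linear_combination hd - hl
    have hc : IsCoprime (bb (z + ((p : ℤ) * μ) • x).1 x.1) ((p : ℤ) ^ k) :=
      (hpp.coprime_iff_not_dvd.mpr hnd).symm.pow_right
    obtain ⟨α, β, hαβ⟩ := hc
    refine ⟨α • x.1, -β, ?_⟩
    rw [bb_smul_right]
    push_cast
    linear_combination hαβ

lemma crt_aux {M : Type*} [AddCommGroup M] (a b : ℤ) (h : IsCoprime a b) (x y : M) :
    ∃ g h : ℤ, x + (a * g) • (y - x) = y + (b * h) • (y - x) := by
  obtain ⟨u, v, huv⟩ := h
  refine ⟨u, -v, ?_⟩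
  have : a * u = 1 + b * (-v) := by linear_combination huv
  rw [this, add_smul, one_smul]
  abel

lemma dvd_QX (n : ℤ) (x y : XX) (g : ℤ) (h : n ∣ QX x - 1) : n ∣ QX (x + (n * g) • y) - 1 := by
  obtain ⟨d, hd⟩ := h
  refine ⟨d + g * BX x y + n * g ^ 2 * QX y, ?_⟩
  rw [QX_add_smul]
  linear_combination hd

lemma dvd_bb (n : ℤ) (x y u v : Fin 8 → ℤ) (g k : ℤ) (h : n ∣ bb x u - 1) :
    n ∣ bb (x + (n * g) • y) (u + (n * k) • v) - 1 := by
  obtain ⟨d, hd⟩ := h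
  refine ⟨d + g * bb y u + k * bb x v + n * g * k * bb y v, ?_⟩
  simp only [bb_add_left, bb_add_right, bb_smul_left, bb_smul_right]
  linear_combination hd

lemma step1 (m : ℕ) (hm : 0 < m) (H : Submodule ℤ XX) (w : Fin 8 → XX)
    (hwH : ∀ i, w i ∈ H)
    (hw : ∀ p : ℕ, p.Prime → p ∣ m →
      ∀ c : Fin 8 → ℤ, (∃ y : XX, ∑ i, c i • w i = (p : ℤ) • y) → ∀ i, (p : ℤ) ∣ c i) :
    ∃ x ∈ H, (m : ℤ) ∣ QX x - 1 ∧ ∃ u, (m : ℤ) ∣ bb x.1 u - 1 := by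
  suffices hh : ∀ n : ℕ, n ∣ m → ∃ x ∈ H, (n : ℤ) ∣ QX x - 1 ∧ ∃ u, (n : ℤ) ∣ bb x.1 u - 1 from
    hh m dvd_rfl
  intro n
  induction n using Nat.recOnPosPrimePosCoprime with
  | zero => intro h; simp at h; omega
  | one => intro _; exact ⟨0, H.zero_mem, by simp, 0, by simp⟩
  | prime_pow p k hp hk =>
    intro h
    exact local_step p k hp H w hwH (hw p hp ((dvd_pow_self p hk.ne').trans h))
  | coprime a b _ _ hab iha ihb =>
    intro h
    obtain ⟨x, hx, hx1, u, hu⟩ := iha ((dvd_mul_right a b).trans h)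
    obtain ⟨y, hy, hy1, v, hv⟩ := ihb ((dvd_mul_left b a).trans h)
    have hc : IsCoprime (a : ℤ) (b : ℤ) := Nat.isCoprime_iff_coprime.mpr hab
    obtain ⟨g, k, hgk⟩ := crt_aux (a : ℤ) b hc x y
    obtain ⟨g', k', hgk'⟩ := crt_aux (a : ℤ) b hc u v
    refine ⟨x + ((a : ℤ) * g) • (y - x), H.add_mem hx (H.smul_mem _ (H.sub_mem hy hx)), ?_,
      u + ((a : ℤ) * g') • (v - u), ?_⟩
    · push_cast
      refine hc.mul_dvd (dvd_QX _ _ _ _ hx1) ?_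
      rw [hgk]
      exact dvd_QX _ _ _ _ hy1
    · push_cast
      refine hc.mul_dvd (dvd_bb _ _ _ _ _ _ _ hu) ?_
      rw [hgk, hgk']
      exact dvd_bb _ _ _ _ _ _ _ hv

lemma step2_aux (m : ℕ) (c u₀ : Fin 8 → ℤ) (hu : (m : ℤ) ∣ bb c u₀ - 1) (d s t : ℤ)
    (hd : qq c = 1 + s * t + m * d) (hs : s ≠ 0) (n : ℕ) :
    (n : ℤ) ∣ s → ∃ u, (n : ℤ) ∣ d + bb c u + m * qq u := by
  induction n using Nat.recOnPosPrimePosCoprime with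
  | zero => intro h; simp at h; omega
  | one => intro _; exact ⟨0, by simp⟩
  | prime_pow p k hp hk =>
    intro h
    have hpp : Prime (p : ℤ) := Nat.prime_iff_prime_int.mp hp
    by_cases hpm : (p : ℤ) ∣ m
    · have hnd : ¬ (p : ℤ) ∣ bb c u₀ := by
        intro h'
        have h2 := dvd_sub h' (hpm.trans hu)
        rw [sub_sub_cancel] at h2
        exact hpp.not_isUnit (isUnit_of_dvd_one h2)
      obtain ⟨m', hm'⟩ := hpm
      obtain ⟨y, hy⟩ := hensel p hp d (bb c u₀) (m' * qq u₀) hnd k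
      refine ⟨y • u₀, ?_⟩
      push_cast
      rw [bb_smul_right, qq_smul, hm']
      convert hy using 1
      ring
    · have hc : IsCoprime (m : ℤ) ((p : ℤ) ^ k) :=
        (hpp.coprime_iff_not_dvd.mpr hpm).symm.pow_right
      obtain ⟨α, β, hαβ⟩ := hc
      let r : Fin 8 → ℤ := Pi.single 1 1
      have hr : qq r = 1 := by decide
      refine ⟨α • (r - c), ?_⟩
      have hc : IsCoprime ((p : ℤ) ^ k) (m : ℤ) := ⟨β, α, by linear_combination hαβ⟩
      push_cast at h ⊢
      refine hc.dvd_of_dvd_mul_left ?_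
      obtain ⟨s', hs'⟩ := h
      have key : c + (m : ℤ) • (α • (r - c)) = r + ((p : ℤ) ^ k) • ((-β) • (r - c)) := by
        have : (m : ℤ) * α = 1 + (p : ℤ) ^ k * (-β) := by linear_combination hαβ
        rw [smul_smul, this, add_smul, one_smul, ← smul_smul]
        abel
      have h1 := congrArg qq key
      rw [qq_add, qq_add, qq_smul (m : ℤ), qq_smul ((p : ℤ) ^ k), bb_smul_right (m : ℤ), bb_smul_right ((p : ℤ) ^ k), hr,
        hd, hs'] at h1
      refine ⟨bb r (-β • (r - c)) + p ^ k * qq (-β • (r - c)) - s' * t, ?_⟩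
      linear_combination h1
  | coprime a b _ _ hab iha ihb =>
    intro h
    push_cast at h
    obtain ⟨u, hu⟩ := iha ((dvd_mul_right _ _).trans h)
    obtain ⟨v, hv⟩ := ihb ((dvd_mul_left _ _).trans h)
    have hc : IsCoprime (a : ℤ) (b : ℤ) := Nat.isCoprime_iff_coprime.mpr hab
    obtain ⟨g, k, hgk⟩ := crt_aux (a : ℤ) b hc u v
    have gen : ∀ (n g : ℤ) (x y : Fin 8 → ℤ), n ∣ d + bb c x + m * qq x →
        n ∣ d + bb c (x + (n * g) • y) + m * qq (x + (n * g) • y) := by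
      rintro n g x y ⟨e, he⟩
      refine ⟨e + g * bb c y + m * (g * bb x y) + m * (n * g ^ 2 * qq y), ?_⟩
      rw [bb_add_right, qq_add, qq_smul, bb_smul_right, bb_smul_right]
      linear_combination he
    refine ⟨u + ((a : ℤ) * g) • (v - u), ?_⟩
    push_cast
    refine hc.mul_dvd (gen _ _ _ _ hu) ?_
    rw [hgk]
    exact gen _ _ _ _ hv

lemma main_abs (m : ℕ) (hm : 0 < m) (H : Submodule ℤ XX) (hmH : ∀ x : XX, (m : ℤ) • x ∈ H)
    (w : Fin 8 → XX) (hwH : ∀ i, w i ∈ H)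
    (hw : ∀ p : ℕ, p.Prime → p ∣ m →
      ∀ c : Fin 8 → ℤ, (∃ y : XX, ∑ i, c i • w i = (p : ℤ) • y) → ∀ i, (p : ℤ) ∣ c i) :
    ∃ x ∈ H, QX x = 1 := by
  obtain ⟨⟨c, s₀, t⟩, hx, hx1, u₀, hu⟩ := step1 m hm H w hwH hw
  simp only [QX] at hx1 hu
  obtain ⟨s, hs, e, he⟩ : ∃ s : ℤ, s ≠ 0 ∧ ∃ e : ℤ, s = s₀ + m * e := by
    by_cases h : s₀ = 0
    · exact ⟨m, by positivity, 1, by rw [h]; ring⟩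
    · exact ⟨s₀, h, 0, by ring⟩
  obtain ⟨d₀, hd₀⟩ := hx1
  obtain ⟨u, hun⟩ := step2_aux m c u₀ hu (d₀ - e * t) s t (by rw [he]; linear_combination hd₀) hs
    s.natAbs (by simp)
  obtain ⟨f, hf⟩ := Int.natAbs_dvd.mp hun
  refine ⟨(c + (m : ℤ) • u, s, t + m * f), ?_, ?_⟩
  · have : (c + (m : ℤ) • u, s, t + m * f) = (c, s₀, t) + (m : ℤ) • ((u, e, f) : XX) := by
      ext <;> simp [he]
    rw [this]
    exact H.add_mem hx (hmH _)
  · simp only [QX, qq_add, qq_smul, bb_smul_right]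
    rw [he] at hf ⊢
    linear_combination hd₀ + m * hf

/-- The isomorphism `E₁₀ ≅ E₈ ⊕ U`, in one direction. -/
def toX : En 10 →ₗ[ℤ] XX where
  toFun x := (fun i => if i = 0 then x.1 0 + 3 * (x.1 10 + x.1 9)
    else x.1 (i.castLE (by omega)) - x.1 10 - x.1 9, -x.1 10, -x.1 9)
  map_add' x y := by
    ext i
    · by_cases h : i = 0 <;> simp [h] <;> ring
    · simp; ring
    · simp; ring
  map_smul' r x := by
    ext i
    · by_cases h : i = 0 <;> simp [h] <;> ring
    · simp
    · simp

lemma mem_En10 (x : Fin 11 → ℤ) : x ∈ En 10 ↔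
    3 * x 0 + x 1 + x 2 + x 3 + x 4 + x 5 + x 6 + x 7 + x 8 + x 9 + x 10 = 0 := by
  change B x (kv 10) = 0 ↔ _
  simp [B, kv, Fin.sum_univ_succ]
  constructor <;> intro h <;> linarith

lemma toX_inj : Function.Injective toX := by
  rintro ⟨x, hx⟩ ⟨y, hy⟩ h
  rw [mem_En10] at hx hy
  simp only [toX, LinearMap.coe_mk, AddHom.coe_mk, Prod.mk.injEq] at h
  obtain ⟨h1, h2, h3⟩ := h
  have a0 := congrFun h1 0
  have a1 := congrFun h1 1
  have a2 := congrFun h1 2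
  have a3 := congrFun h1 3
  have a4 := congrFun h1 4
  have a5 := congrFun h1 5
  have a6 := congrFun h1 6
  have a7 := congrFun h1 7
  simp [Fin.castLE] at a0 a1 a2 a3 a4 a5 a6 a7
  apply Subtype.ext
  funext i
  fin_cases i <;> simp <;> linarith

lemma toX_surj : Function.Surjective toX := by
  rintro ⟨c, s, t⟩
  refine ⟨⟨![c 0 + 3 * s + 3 * t, c 1 - s - t, c 2 - s - t, c 3 - s - t, c 4 - s - t, c 5 - s - t,
    c 6 - s - t, c 7 - s - t,
    -(3 * c 0 + c 1 + c 2 + c 3 + c 4 + c 5 + c 6 + c 7) - s - t, -t, -s], ?_⟩, ?_⟩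
  · rw [mem_En10]
    simp
    ring
  · ext i
    · fin_cases i <;> simp [toX, Fin.castLE] <;> ring
    · simp [toX]
    · simp [toX]

lemma toX_B (x : En 10) : B x.1 x.1 = -2 * QX (toX x) := by
  obtain ⟨x, hx⟩ := x
  rw [mem_En10] at hx
  have h8 : x 8 = -(3 * x 0 + x 1 + x 2 + x 3 + x 4 + x 5 + x 6 + x 7 + x 9 + x 10) := by linarith
  have h := qq_eq (toX ⟨x, (mem_En10 x).mpr hx⟩).1
  have hB : B x x = x 0 ^ 2 - x 1 ^ 2 - x 2 ^ 2 - x 3 ^ 2 - x 4 ^ 2 - x 5 ^ 2 - x 6 ^ 2 - x 7 ^ 2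
      - x 8 ^ 2 - x 9 ^ 2 - x 10 ^ 2 := by
    simp [B, Fin.sum_univ_succ]
    ring
  rw [QX, mul_sub, neg_mul, h, hB]
  simp [toX, Fin.castLE]
  rw [h8]
  ring

/-- if `V` is a `ℤ/mℤ`-submodule of `L_m = E₁₀/mE₁₀` containing a submodule
isomorphic to `(ℤ/mℤ)^8`, then some root of `E₁₀` maps into `V`. -/
theorem exists_root_mapping_into_submodule (m : ℕ) (hm : 0 < m)
    (V : Submodule ℤ ((En 10) ⧸ mE m))
    (f : (Fin 8 → ZMod m) →ₗ[ℤ] (En 10) ⧸ mE m)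
    (hf : Function.Injective f)
    (hfV : LinearMap.range f ≤ V) :
    ∃ α : En 10, B (α : Fin 11 → ℤ) (α : Fin 11 → ℤ) = -2 ∧
      (Submodule.Quotient.mk α : (En 10) ⧸ mE m) ∈ V := by
  let Φ : En 10 ≃ₗ[ℤ] XX := LinearEquiv.ofBijective toX ⟨toX_inj, toX_surj⟩
  let H : Submodule ℤ XX := (V.comap (mE m).mkQ).map Φ.toLinearMap
  have hmem : ∀ x : En 10, Φ x ∈ H ↔ (mE m).mkQ x ∈ V := by
    intro x
    constructor
    · rintro ⟨y, hy, hxy⟩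
      rw [← Φ.injective hxy]; exact hy
    · intro h; exact ⟨x, h, rfl⟩
  have hzero : ∀ x : En 10, (mE m).mkQ ((m : ℤ) • x) = 0 := by
    intro x
    rw [Submodule.mkQ_apply, Submodule.Quotient.mk_eq_zero]
    exact ⟨x, rfl⟩
  choose w hw using fun i : Fin 8 => (mE m).mkQ_surjective (f (Pi.single i 1))
  have hfw : ∀ c : Fin 8 → ℤ, f (fun i => (c i : ZMod m)) = (mE m).mkQ (∑ i, c i • w i) := by
    intro c
    simp only [map_sum, map_zsmul, hw]
    simp only [← map_zsmul, ← map_sum]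
    congr 1
    funext j
    simp [Finset.sum_apply, Pi.single_apply]
  obtain ⟨x, hx, hx1⟩ := main_abs m hm H
    (by
      intro x
      obtain ⟨y, rfl⟩ := Φ.surjective x
      rw [← map_zsmul, hmem, hzero]
      exact V.zero_mem)
    (fun i => Φ (w i))
    (fun i => by rw [hmem, hw]; exact hfV ⟨_, rfl⟩)
    (by
      rintro p hp ⟨k, rfl⟩ c ⟨y, hy⟩ i
      obtain ⟨y, rfl⟩ := Φ.surjective y
      have h1 : ∑ i, c i • w i = (p : ℤ) • y := Φ.injective (by
        simpa only [map_sum, map_zsmul] using hy)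
      have h2 : f (fun i => ((k * c i : ℤ) : ZMod (p * k))) = 0 := by
        rw [hfw]
        have : ∑ i, ((k : ℤ) * c i) • w i = ((p * k : ℕ) : ℤ) • y := by
          simp only [← smul_smul, ← Finset.smul_sum]
          rw [h1, smul_smul]
          push_cast
          rw [mul_comm]
        rw [this, hzero]
      have h3 := hf (h2.trans (map_zero f).symm)
      have h4 := congrFun h3 i
      simp only [Pi.zero_apply] at h4
      rw [ZMod.intCast_zmod_eq_zero_iff_dvd] at h4
      push_cast at h4
      rw [mul_comm] at h4
      have hk : (k : ℤ) ≠ 0 := by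
        rintro h
        have : k = 0 := by exact_mod_cast h
        simp [this] at hm
      exact (mul_dvd_mul_iff_left hk).mp h4)
  obtain ⟨α, rfl⟩ := Φ.surjective x
  refine ⟨α, ?_, (hmem α).mp hx⟩
  rw [toX_B]
  change -2 * QX (Φ α) = -2
  rw [hx1]; norm_num
end

section
/- Let p be a prime and k ≥ 1 an integer, and let M be a ℤ/p^kℤ-submodule of E_{10}/p^kE_{10} that contains a submodule isomorphic as a ℤ/p^kℤ-module to (ℤ/p^kℤ)^8. Then M represents all invertible elements of ℤ/p^kℤ: for every unit a of ℤ/p^kℤ there exists x ∈ E_{10} whose image in E_{10}/p^kE_{10} lies in M and such that (1/2)⟨x,x⟩ ≡ a (mod p^k). (Here (1/2)⟨x,x⟩ is an integer, since ⟨x,x⟩ is even for every x ∈ E_{10}.) -/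
/-- A (non-symmetric) bilinear form whose diagonal is half the norm form in the
coordinates `x₀, …, x₉`. -/
def Af {R : Type*} [CommRing R] (x y : Fin 10 → R) : R :=
  -(4 * x 0 * y 0 + 3 * x 0 * (y 1 + y 2 + y 3 + y 4 + y 5 + y 6 + y 7 + y 8 + y 9)
    + x 1 * (y 1 + y 2 + y 3 + y 4 + y 5 + y 6 + y 7 + y 8 + y 9)
    + x 2 * (y 2 + y 3 + y 4 + y 5 + y 6 + y 7 + y 8 + y 9)
    + x 3 * (y 3 + y 4 + y 5 + y 6 + y 7 + y 8 + y 9)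
    + x 4 * (y 4 + y 5 + y 6 + y 7 + y 8 + y 9)
    + x 5 * (y 5 + y 6 + y 7 + y 8 + y 9)
    + x 6 * (y 6 + y 7 + y 8 + y 9)
    + x 7 * (y 7 + y 8 + y 9)
    + x 8 * (y 8 + y 9)
    + x 9 * y 9)

/-- `Af` as a bilinear form. -/
def Abil (R : Type*) [CommRing R] : LinearMap.BilinForm R (Fin 10 → R) :=
  LinearMap.mk₂ R Af
    (by intro a b c; simp only [Af, Pi.add_apply]; ring)
    (by intro a b c; simp only [Af, Pi.smul_apply, smul_eq_mul]; ring)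
    (by intro a b c; simp only [Af, Pi.add_apply]; ring)
    (by intro a b c; simp only [Af, Pi.smul_apply, smul_eq_mul]; ring)

lemma Abil_apply {R : Type*} [CommRing R] (x y : Fin 10 → R) : Abil R x y = Af x y := rfl

/-- The symmetric form. -/
def Sb (R : Type*) [CommRing R] : LinearMap.BilinForm R (Fin 10 → R) :=
  Abil R + (Abil R).flip

lemma Sb_apply {R : Type*} [CommRing R] (x y : Fin 10 → R) :
    Sb R x y = Af x y + Af y x := rfl

lemma Sb_refl (R : Type*) [CommRing R] : (Sb R).IsRefl := by
  intro x y h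
  rw [Sb_apply] at h ⊢
  rw [add_comm]; exact h

lemma Sb_sep {R : Type*} [CommRing R] (x : Fin 10 → R) (h : ∀ y, Sb R x y = 0) : x = 0 := by
  have h0 := h (Pi.single 0 1)
  have h1 := h (Pi.single 1 1)
  have h2 := h (Pi.single 2 1)
  have h3 := h (Pi.single 3 1)
  have h4 := h (Pi.single 4 1)
  have h5 := h (Pi.single 5 1)
  have h6 := h (Pi.single 6 1)
  have h7 := h (Pi.single 7 1)
  have h8 := h (Pi.single 8 1)
  have h9 := h (Pi.single 9 1)
  simp [Sb_apply, Af, Pi.single_apply] at h0 h1 h2 h3 h4 h5 h6 h7 h8 h9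
  obtain ⟨S, hS⟩ : ∃ S, S = x 1 + x 2 + x 3 + x 4 + x 5 + x 6 + x 7 + x 8 + x 9 := ⟨_, rfl⟩
  obtain ⟨T, hT⟩ : ∃ T, T = 3 * x 0 + S := ⟨_, rfl⟩
  have e0 : 8 * x 0 + 3 * S = 0 := by linear_combination -h0 + 3 * hS
  have e1 : x 1 = -T := by linear_combination -h1 + hT + hS
  have e2 : x 2 = -T := by linear_combination -h2 + hT + hS
  have e3 : x 3 = -T := by linear_combination -h3 + hT + hS
  have e4 : x 4 = -T := by linear_combination -h4 + hT + hS
  have e5 : x 5 = -T := by linear_combination -h5 + hT + hS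
  have e6 : x 6 = -T := by linear_combination -h6 + hT + hS
  have e7 : x 7 = -T := by linear_combination -h7 + hT + hS
  have e8 : x 8 = -T := by linear_combination -h8 + hT + hS
  have e9 : x 9 = -T := by linear_combination -h9 + hT + hS
  have eS : S = -9 * T := by
    linear_combination hS + e1 + e2 + e3 + e4 + e5 + e6 + e7 + e8 + e9
  have f1 : 3 * x 0 = 10 * T := by linear_combination -hT - eS
  have f2 : 8 * x 0 = 27 * T := by linear_combination e0 - 3 * eS
  have f3 : x 0 = 3 * T := by linear_combination 3 * f1 - f2
  have f4 : T = 0 := by linear_combination 3 * f3 - f1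
  funext i
  fin_cases i
  · simp [f3, f4]
  · simp [e1, f4]
  · simp [e2, f4]
  · simp [e3, f4]
  · simp [e4, f4]
  · simp [e5, f4]
  · simp [e6, f4]
  · simp [e7, f4]
  · simp [e8, f4]
  · simp [e9, f4]

lemma Sb_nondeg (R : Type*) [CommRing R] : (Sb R).Nondegenerate :=
  ⟨fun x h => Sb_sep x h, fun x h => Sb_sep x (fun y => by
    have := h y
    rw [Sb_apply] at this ⊢
    rw [add_comm]; exact this)⟩

/-- Chevalley: quadratic forms in at least three variables over a finite field are isotropic. -/
lemma exists_isotropic {p : ℕ} [Fact p.Prime] {U : Type*} [AddCommGroup U] [Module (ZMod p) U]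
    [Module.Finite (ZMod p) U] (h : 3 ≤ Module.finrank (ZMod p) U)
    (A : LinearMap.BilinForm (ZMod p) U) : ∃ x : U, x ≠ 0 ∧ A x x = 0 := by
  classical
  let b := Module.finBasis (ZMod p) U
  let P : MvPolynomial (Fin (Module.finrank (ZMod p) U)) (ZMod p) :=
    ∑ i, ∑ j, MvPolynomial.C (A (b i) (b j)) * (MvPolynomial.X i * MvPolynomial.X j)
  have hdeg : P.totalDegree ≤ 2 := by
    refine MvPolynomial.totalDegree_finsetSum_le (fun i _ => ?_)
    refine MvPolynomial.totalDegree_finsetSum_le (fun j _ => ?_)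
    refine (MvPolynomial.totalDegree_mul _ _).trans ?_
    rw [MvPolynomial.totalDegree_C, zero_add]
    refine (MvPolynomial.totalDegree_mul _ _).trans ?_
    simp [MvPolynomial.totalDegree_X]
  have hev : ∀ c, MvPolynomial.eval c P = A (∑ i, c i • b i) (∑ i, c i • b i) := by
    intro c
    simp only [P, map_sum, map_mul, MvPolynomial.eval_C, MvPolynomial.eval_X,
      LinearMap.sum_apply, map_smul, LinearMap.smul_apply, smul_eq_mul, Finset.mul_sum]
    rw [Finset.sum_comm]
    refine Finset.sum_congr rfl fun i _ => Finset.sum_congr rfl fun j _ => ?_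
    ring
  have hdvd := char_dvd_card_solutions p (K := ZMod p) (f := P) (by
    rw [Fintype.card_fin]; omega)
  let z : {x // MvPolynomial.eval x P = 0} := ⟨0, by rw [hev]; simp⟩
  have hpos : 0 < Fintype.card {x // MvPolynomial.eval x P = 0} := Fintype.card_pos_iff.2 ⟨z⟩
  have h1 : 1 < Fintype.card {x // MvPolynomial.eval x P = 0} :=
    lt_of_lt_of_le (Fact.out : p.Prime).one_lt (Nat.le_of_dvd hpos hdvd)
  obtain ⟨⟨c, hc⟩, hne⟩ := Fintype.exists_ne_of_one_lt_card h1 z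
  refine ⟨∑ i, c i • b i, fun h0 => hne ?_, by rw [← hev]; exact hc⟩
  apply Subtype.ext
  funext i
  exact (Fintype.linearIndependent_iff.1 b.linearIndependent) c h0 i

lemma exists_pair {p : ℕ} [Fact p.Prime] (W : Submodule (ZMod p) (Fin 10 → ZMod p))
    (hW : Module.finrank (ZMod p) W = 8) :
    ∃ x ∈ W, ∃ y ∈ W, Af x x = 0 ∧ Sb (ZMod p) x y ≠ 0 := by
  have ho := LinearMap.BilinForm.finrank_orthogonal (Sb_nondeg (ZMod p)) W
  rw [hW, Module.finrank_fin_fun] at ho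
  obtain ⟨Rd, hRd⟩ : ∃ Rd, Rd = W ⊓ (Sb (ZMod p)).orthogonal W := ⟨_, rfl⟩
  have hR : Module.finrank (ZMod p) Rd ≤ 2 := by
    have := Submodule.finrank_mono (hRd.trans_le inf_le_right)
    omega
  obtain ⟨C, hC⟩ := Submodule.exists_isCompl Rd
  have hC8 := Submodule.finrank_add_eq_of_isCompl hC
  rw [Module.finrank_fin_fun] at hC8
  have hU := Submodule.finrank_sup_add_finrank_inf_eq W C
  have hle := Submodule.finrank_le (W ⊔ C)
  rw [Module.finrank_fin_fun] at hle
  obtain ⟨⟨x, hx⟩, hx0, hxA⟩ := exists_isotropic (U := ↥(W ⊓ C)) (by omega)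
    ((Abil (ZMod p)).restrict (W ⊓ C))
  have hx0' : x ≠ 0 := fun h => hx0 (Subtype.ext h)
  refine ⟨x, hx.1, ?_⟩
  by_contra hcon
  push Not at hcon
  have hxR : x ∈ Rd := by
    rw [hRd]
    refine ⟨hx.1, ?_⟩
    rw [SetLike.mem_coe, LinearMap.BilinForm.mem_orthogonal_iff]
    intro y hy
    exact Sb_refl _ _ _ (hcon y hy hxA)
  exact hx0' (Submodule.disjoint_def.1 hC.disjoint x hxR hx.2)

/-- Hensel's lemma for the quadratic polynomial `α + t b + t² γ`, `p ∤ b`, `p ∣ γ`. -/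
lemma hensel_quad {p : ℕ} (hp : p.Prime) (α b γ : ℤ) (hb : ¬ (p : ℤ) ∣ b) (hγ : (p : ℤ) ∣ γ)
    (k : ℕ) : ∃ t : ℤ, (p : ℤ) ^ k ∣ α + t * b + t ^ 2 * γ := by
  have hpi : Prime (p : ℤ) := Nat.prime_iff_prime_int.1 hp
  obtain ⟨g, rfl⟩ := hγ
  have hcop : IsCoprime b (p : ℤ) := ((hpi.coprime_iff_not_dvd).2 hb).symm
  obtain ⟨u, v, huv⟩ := hcop
  induction k with
  | zero => exact ⟨0, by simp⟩
  | succ k ih =>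
    obtain ⟨t, m, hm⟩ := ih
    refine ⟨t + (p : ℤ) ^ k * (-(m * u)), ?_⟩
    refine ⟨m * v + 2 * t * (-(m * u)) * g + (p : ℤ) ^ k * (m * u) ^ 2 * g, ?_⟩
    rw [pow_succ]
    linear_combination hm - (p : ℤ) ^ k * m * huv

/-- The first ten coordinates. -/
def co (x : Fin 11 → ℤ) : Fin 10 → ℤ := fun i => x i.castSucc

lemma mem_En (x : Fin 11 → ℤ) : x ∈ En 10 ↔ x 10 = -3 * x 0 -
    (x 1 + x 2 + x 3 + x 4 + x 5 + x 6 + x 7 + x 8 + x 9) := by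
  change B x (kv 10) = 0 ↔ _
  simp [B, kv, Fin.sum_univ_succ, Fin.succ_ne_zero]
  constructor <;> intro h <;> linarith

lemma B_eq (x : Fin 11 → ℤ) (hx : x ∈ En 10) : B x x = 2 * Af (co x) (co x) := by
  rw [mem_En] at hx
  have : B x x = x 0 * x 0 - (x 1 * x 1 + x 2 * x 2 + x 3 * x 3 + x 4 * x 4 + x 5 * x 5 +
    x 6 * x 6 + x 7 * x 7 + x 8 * x 8 + x 9 * x 9 + x 10 * x 10) := by
    simp [B, Fin.sum_univ_succ]
    ring
  rw [this, hx]
  change _ = 2 * -(4 * x 0 * x 0 + 3 * x 0 * (x 1 + x 2 + x 3 + x 4 + x 5 + x 6 + x 7 + x 8 + x 9)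
    + x 1 * (x 1 + x 2 + x 3 + x 4 + x 5 + x 6 + x 7 + x 8 + x 9)
    + x 2 * (x 2 + x 3 + x 4 + x 5 + x 6 + x 7 + x 8 + x 9)
    + x 3 * (x 3 + x 4 + x 5 + x 6 + x 7 + x 8 + x 9)
    + x 4 * (x 4 + x 5 + x 6 + x 7 + x 8 + x 9)
    + x 5 * (x 5 + x 6 + x 7 + x 8 + x 9)
    + x 6 * (x 6 + x 7 + x 8 + x 9)
    + x 7 * (x 7 + x 8 + x 9)
    + x 8 * (x 8 + x 9)
    + x 9 * x 9)
  ring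

/-- Reduction modulo `p` in coordinates. -/
def red (p : ℕ) : En 10 →ₗ[ℤ] (Fin 10 → ZMod p) where
  toFun x := fun i => ((x : Fin 11 → ℤ) i.castSucc : ZMod p)
  map_add' x y := by funext i; simp
  map_smul' c x := by funext i; simp

lemma red_ker {p : ℕ} (x : En 10) (h : red p x = 0) : ∃ z : En 10, x = (p : ℤ) • z := by
  have h' : ∀ i : Fin 10, (p : ℤ) ∣ (x : Fin 11 → ℤ) i.castSucc := fun i =>
    (ZMod.intCast_zmod_eq_zero_iff_dvd _ p).1 (congrFun h i)
  have hx := (mem_En _).1 x.2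
  have hall : ∀ i : Fin 11, (p : ℤ) ∣ (x : Fin 11 → ℤ) i := by
    intro i
    refine Fin.lastCases ?_ h' i
    change (p : ℤ) ∣ (x : Fin 11 → ℤ) 10
    rw [hx]
    have g0 := h' 0
    have g1 := h' 1
    have g2 := h' 2
    have g3 := h' 3
    have g4 := h' 4
    have g5 := h' 5
    have g6 := h' 6
    have g7 := h' 7
    have g8 := h' 8
    have g9 := h' 9
    exact dvd_sub (dvd_mul_of_dvd_right g0 _) (dvd_add (dvd_add (dvd_add (dvd_add (dvd_add
      (dvd_add (dvd_add (dvd_add g1 g2) g3) g4) g5) g6) g7) g8) g9)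
  choose z hz using hall
  by_cases hp : (p : ℤ) = 0
  · refine ⟨0, ?_⟩
    apply Subtype.ext
    funext i
    simp [hz i, hp]
  · refine ⟨⟨z, ?_⟩, ?_⟩
    · rw [mem_En]
      apply mul_left_cancel₀ hp
      rw [← hz 10, hx, hz 0, hz 1, hz 2, hz 3, hz 4, hz 5, hz 6, hz 7, hz 8, hz 9]
      ring
    · apply Subtype.ext
      funext i
      simpa using hz i

lemma Af_cast (p : ℕ) (x y : En 10) :
    ((Af (co x) (co y) : ℤ) : ZMod p) = Af (red p x) (red p y) := by
  simp only [Af, co, red, LinearMap.coe_mk, AddHom.coe_mk]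
  push_cast
  rfl

lemma exists_int_comb {p : ℕ} (w : Fin 8 → En 10) (x : Fin 10 → ZMod p)
    (hx : x ∈ Submodule.span (ZMod p) (Set.range fun i => red p (w i))) :
    ∃ c : Fin 8 → ℤ, red p (∑ i, c i • w i) = x := by
  obtain ⟨c, rfl⟩ := (Submodule.mem_span_range_iff_exists_fun (ZMod p)).1 hx
  choose d hd using fun i => ZMod.intCast_surjective (c i)
  refine ⟨d, ?_⟩
  rw [map_sum]
  refine Finset.sum_congr rfl fun i _ => ?_
  rw [map_smul, ← hd i]
  exact (Int.cast_smul_eq_zsmul _ _ _).symm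

/-- if `M ⊆ E₁₀/p^kE₁₀` contains a submodule isomorphic to `(ℤ/p^kℤ)^8`,
then `M` represents all invertible elements of `ℤ/p^kℤ` via `x ↦ (1/2)⟨x,x⟩`. -/
theorem represents_all_units (p : ℕ) (hp : p.Prime) (k : ℕ) (hk : 1 ≤ k)
    (M : Submodule ℤ ((En 10) ⧸ mE (p ^ k)))
    (f : (Fin 8 → ZMod (p ^ k)) →ₗ[ℤ] (En 10) ⧸ mE (p ^ k))
    (hf : Function.Injective f)
    (hfM : LinearMap.range f ≤ M)
    (a : (ZMod (p ^ k))ˣ) :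
    ∃ x : En 10, (Submodule.Quotient.mk x : (En 10) ⧸ mE (p ^ k)) ∈ M ∧
      ∃ t : ℤ, B (x : Fin 11 → ℤ) (x : Fin 11 → ℤ) = 2 * t ∧
        (t : ZMod (p ^ k)) = (a : ZMod (p ^ k)) := by
  haveI : Fact p.Prime := ⟨hp⟩
  choose w hw using fun i : Fin 8 => Submodule.Quotient.mk_surjective (mE (p ^ k))
    (f (Pi.single i 1))
  have hcomb : ∀ c : Fin 8 → ℤ, (Submodule.Quotient.mk (∑ i, c i • w i) : (En 10) ⧸ mE (p ^ k))
      = f (fun i => (c i : ZMod (p ^ k))) := by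
    intro c
    have h1 : (fun i => (c i : ZMod (p ^ k))) = ∑ i, c i • (Pi.single i 1 : Fin 8 → ZMod (p ^ k)) := by
      funext j
      simp [Finset.sum_apply, Pi.single_apply]
    rw [h1, map_sum, ← Submodule.mkQ_apply, map_sum]
    refine Finset.sum_congr rfl fun i _ => ?_
    rw [map_smul, map_smul, Submodule.mkQ_apply, hw]
  have hindep : LinearIndependent (ZMod p) (fun i => red p (w i)) := by
    rw [Fintype.linearIndependent_iff]
    intro c hc i
    choose d hd using fun i => ZMod.intCast_surjective (c i)
    have h0 : red p (∑ i, d i • w i) = 0 := by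
      rw [← hc, map_sum]
      refine Finset.sum_congr rfl fun i _ => ?_
      rw [map_smul, ← hd i]
      exact (Int.cast_smul_eq_zsmul _ _ _).symm
    obtain ⟨z, hz⟩ := red_ker _ h0
    have h2 := hcomb (fun i => (p : ℤ) ^ (k - 1) * d i)
    have hpk : (p : ℤ) ^ (k - 1) * p = ((p ^ k : ℕ) : ℤ) := by
      rw [← pow_succ, Nat.sub_add_cancel hk]; push_cast; rfl
    have h3 : (∑ i, ((p : ℤ) ^ (k - 1) * d i) • w i) ∈ mE (p ^ k) := by
      refine ⟨z, ?_⟩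
      simp only [mul_smul]
      rw [← Finset.smul_sum, hz, ← mul_smul, hpk]
      rfl
    rw [(Submodule.Quotient.mk_eq_zero _).2 h3] at h2
    have h4 := hf (h2.symm.trans (map_zero f).symm)
    have h5 := congrFun h4 i
    have h6 := (ZMod.intCast_zmod_eq_zero_iff_dvd _ _).1 h5
    rw [← hpk] at h6
    have h7 := Int.dvd_of_mul_dvd_mul_left (pow_ne_zero _ (by exact_mod_cast hp.ne_zero)) h6
    rw [← hd i]
    exact (ZMod.intCast_zmod_eq_zero_iff_dvd _ _).2 h7
  obtain ⟨x, hx, y, hy, hxx, hxy⟩ := exists_pair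
    (Submodule.span (ZMod p) (Set.range fun i => red p (w i)))
    (by rw [finrank_span_eq_card hindep]; simp)
  obtain ⟨c, hc⟩ := exists_int_comb w x hx
  obtain ⟨d, hd⟩ := exists_int_comb w y hy
  obtain ⟨X, hX⟩ : ∃ X, X = ∑ i, c i • w i := ⟨_, rfl⟩
  obtain ⟨Y, hY⟩ : ∃ Y, Y = ∑ i, d i • w i := ⟨_, rfl⟩
  rw [← hX] at hc
  rw [← hY] at hd
  obtain ⟨a', ha'⟩ := ZMod.intCast_surjective (a : ZMod (p ^ k))
  obtain ⟨t, ht⟩ := hensel_quad hp (Af (co Y) (co Y) - a') (Sb ℤ (co X) (co Y))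
    (Af (co X) (co X))
    (by
      intro hdv
      apply hxy
      rw [← hc, ← hd, Sb_apply, ← Af_cast, ← Af_cast, ← Int.cast_add]
      exact (ZMod.intCast_zmod_eq_zero_iff_dvd _ _).2 hdv)
    (by
      rw [← ZMod.intCast_zmod_eq_zero_iff_dvd, Af_cast, hc, hxx]) k
  refine ⟨Y + t • X, ?_, Af (co (Y + t • X : En 10)) (co (Y + t • X : En 10)),
    B_eq _ (Y + t • X).2, ?_⟩
  · apply hfM
    rw [← Submodule.mkQ_apply, map_add, map_smul, Submodule.mkQ_apply, Submodule.mkQ_apply,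
      hX, hY, hcomb, hcomb]
    exact Submodule.add_mem _ ⟨_, rfl⟩ (Submodule.smul_mem _ _ ⟨_, rfl⟩)
  · rw [← ha', ← sub_eq_zero, ← Int.cast_sub, ZMod.intCast_zmod_eq_zero_iff_dvd]
    push_cast
    convert ht using 1
    have : co ((Y : Fin 11 → ℤ) + t • (X : Fin 11 → ℤ)) = co Y + t • co X := by
      funext i; simp [co]
    rw [this, ← Abil_apply, Sb_apply, ← Abil_apply, ← Abil_apply, ← Abil_apply, ← Abil_apply]
    simp only [map_add, map_smul, LinearMap.add_apply, LinearMap.smul_apply, smul_eq_mul]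
    ring
end

section
/- Let p be a prime and k ≥ 1 an integer, and let M be a ℤ/p^kℤ-submodule of E_{10}/p^kE_{10} that contains a submodule isomorphic as a ℤ/p^kℤ-module to (ℤ/p^kℤ)^8. Then for every unit a of ℤ/p^kℤ there exist x, y ∈ E_{10} whose images in E_{10}/p^kE_{10} both lie in M and such that (1/2)⟨x,x⟩ ≡ a (mod p^k) and ⟨x,y⟩ ≡ 1 (mod p^k). (Here (1/2)⟨x,x⟩ is an integer, since ⟨x,x⟩ is even for every x ∈ E_{10}.) -/
open Matrix in
/-- Chevalley: an isotropic vector outside the radical. -/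
lemma exists_isotropic_s2 {F : Type*} [Field F] [Fintype F] {n : ℕ}
    (A : Matrix (Fin n) (Fin n) F) (G : Matrix (Fin n) (Fin n) F) (h : 3 ≤ G.rank) :
    ∃ u : Fin n → F, u ⬝ᵥ A *ᵥ u = 0 ∧ G *ᵥ u ≠ 0 := by
  classical
  obtain ⟨p, hp⟩ := CharP.exists F
  have hrk : 3 ≤ Module.finrank F (LinearMap.range G.mulVecLin) := h
  obtain ⟨w, hw⟩ := exists_linearIndependent_of_le_finrank hrk
  have hw' : ∀ i, ∃ v, G.mulVecLin v = w i := fun i => (w i).2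
  choose v hv using hw'
  have hw2 : LinearIndependent F (fun i => ((w i : LinearMap.range G.mulVecLin) : Fin n → F)) :=
    hw.map' (Submodule.subtype _) (Submodule.ker_subtype _)
  let P : MvPolynomial (Fin 3) F := ∑ i, ∑ j,
    MvPolynomial.C (v i ⬝ᵥ A *ᵥ v j) * MvPolynomial.X i * MvPolynomial.X j
  have hdeg : P.totalDegree < Fintype.card (Fin 3) := by
    have : P.totalDegree ≤ 2 := by
      refine MvPolynomial.totalDegree_finsetSum_le fun i _ => ?_
      refine MvPolynomial.totalDegree_finsetSum_le fun j _ => ?_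
      refine (MvPolynomial.totalDegree_mul _ _).trans ?_
      have h1 := MvPolynomial.totalDegree_mul
        (MvPolynomial.C (v i ⬝ᵥ A *ᵥ v j) : MvPolynomial (Fin 3) F) (MvPolynomial.X i)
      simp only [MvPolynomial.totalDegree_C, MvPolynomial.totalDegree_X] at h1 ⊢
      omega
    simp; omega
  have hev : ∀ s : Fin 3 → F, MvPolynomial.eval s P =
      (∑ i, s i • v i) ⬝ᵥ A *ᵥ (∑ i, s i • v i) := by
    intro s
    rw [Matrix.mulVec_sum]
    simp only [P, map_sum, map_mul, MvPolynomial.eval_C, MvPolynomial.eval_X,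
      sum_dotProduct, dotProduct_sum, Matrix.mulVec_smul, smul_dotProduct, dotProduct_smul,
      smul_eq_mul, Finset.mul_sum]
    try rw [Finset.sum_comm]
    refine Finset.sum_congr rfl fun i _ => ?_
    refine Finset.sum_congr rfl fun j _ => ?_
    ring
  have hdvd := char_dvd_card_solutions (K := F) (σ := Fin 3) p (f := P) hdeg
  have hpp : p.Prime := CharP.char_is_prime F p
  have h0 : MvPolynomial.eval (0 : Fin 3 → F) P = 0 := by rw [hev]; simp
  have hcard : 1 < Fintype.card {x : Fin 3 → F // MvPolynomial.eval x P = 0} := by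
    have : 0 < Fintype.card {x : Fin 3 → F // MvPolynomial.eval x P = 0} :=
      Fintype.card_pos_iff.2 ⟨⟨0, h0⟩⟩
    exact lt_of_lt_of_le hpp.one_lt (Nat.le_of_dvd this hdvd)
  obtain ⟨⟨s, hs⟩, hne⟩ := Fintype.exists_ne_of_one_lt_card hcard ⟨0, h0⟩
  refine ⟨∑ i, s i • v i, by rw [← hev, hs], fun hG => hne ?_⟩
  have : ∑ i, s i • ((w i : LinearMap.range G.mulVecLin) : Fin n → F) = 0 := by
    rw [← hG, Matrix.mulVec_sum]
    refine Finset.sum_congr rfl fun i _ => ?_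
    rw [Matrix.mulVec_smul, ← hv i]; rfl
  have := Fintype.linearIndependent_iff.1 hw2 s this
  ext i
  simp [this i]

open Matrix in
lemma rank_gram {F : Type*} [Field F] (X : Matrix (Fin 8) (Fin 11) F) (d : Fin 11 → F)
    (hd : ∀ i, d i ≠ 0) (hX : ∀ c, c ᵥ* X = 0 → c = 0) :
    3 ≤ (X * Matrix.diagonal d * Xᵀ).rank := by
  have hXr : X.rank = 8 := by
    rw [← Matrix.rank_transpose, Matrix.rank]
    rw [LinearMap.finrank_range_of_inj]
    · simp
    · rw [← LinearMap.ker_eq_bot, LinearMap.ker_eq_bot']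
      intro c hc
      apply hX
      simpa [Matrix.mulVec_transpose] using hc
  have hk : Module.finrank F (LinearMap.ker X.mulVecLin) = 3 := by
    have := LinearMap.finrank_range_add_finrank_ker X.mulVecLin
    have h2 : Module.finrank F (LinearMap.range X.mulVecLin) = 8 := hXr
    simp at this
    omega
  have h3 := LinearMap.finrank_range_add_finrank_ker (X * Matrix.diagonal d * Xᵀ).mulVecLin
  have h4 : Module.finrank F (LinearMap.ker (X * Matrix.diagonal d * Xᵀ).mulVecLin) ≤
      Module.finrank F (LinearMap.ker X.mulVecLin) := by
    let g : (Fin 8 → F) →ₗ[F] (Fin 11 → F) := (Matrix.diagonal d * Xᵀ).mulVecLin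
    have hmem : ∀ c ∈ LinearMap.ker (X * Matrix.diagonal d * Xᵀ).mulVecLin,
        g c ∈ LinearMap.ker X.mulVecLin := by
      intro c hc
      simpa [g, Matrix.mul_assoc] using hc
    refine LinearMap.finrank_le_finrank_of_injective (f := g.restrict hmem) ?_
    rw [← LinearMap.ker_eq_bot, LinearMap.ker_eq_bot']
    rintro ⟨c, hc⟩ h
    have h5 : g c = 0 := congrArg Subtype.val h
    have : c = 0 := by
      apply hX
      ext i
      have h6 := congrFun h5 i
      simp only [g, Matrix.mulVecLin_apply, ← Matrix.mulVec_mulVec, Matrix.mulVec_diagonal,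
        Matrix.mulVec_transpose, Pi.zero_apply, mul_eq_zero, hd i, false_or] at h6
      simpa using h6
    simpa using this
  have h7 : Module.finrank F (Fin 8 → F) = 8 := by simp
  rw [Matrix.rank]
  omega

lemma solve_core (p : ℕ) (hp : p.Prime) (k : ℕ) (hk : 1 ≤ k) (r s m : ℤ)
    (hs : (p : ℤ) ∣ s) (hm : ¬ (p : ℤ) ∣ m) (a : ZMod (p ^ k)) :
    ∃ t w : ℤ, ((r + t * m + t * t * s : ℤ) : ZMod (p ^ k)) = a ∧
      ((w * (m + 2 * t * s) : ℤ) : ZMod (p ^ k)) = 1 := by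
  haveI : NeZero (p ^ k) := ⟨pow_ne_zero _ hp.ne_zero⟩
  have hunit : ∀ z : ℤ, ¬ (p : ℤ) ∣ z → IsUnit (z : ZMod (p ^ k)) := by
    intro z hz
    rw [ZMod.coe_int_isUnit_iff_isCoprime]
    push_cast
    exact IsCoprime.pow_left ((Nat.prime_iff_prime_int.1 hp).coprime_iff_not_dvd.2 hz)
  have hu2 : ∀ e : ℤ, IsUnit ((m + e * s : ℤ) : ZMod (p ^ k)) := by
    intro e
    apply hunit
    intro h
    exact hm ((dvd_add_left (hs.mul_left e)).1 h)
  let φ : ZMod (p ^ k) → ZMod (p ^ k) := fun t => r + t * m + t * t * s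
  have hinj : Function.Injective φ := by
    intro t t' h
    obtain ⟨t, rfl⟩ := ZMod.intCast_surjective t
    obtain ⟨t', rfl⟩ := ZMod.intCast_surjective t'
    have h1 : ((t : ZMod (p ^ k)) - t') * ((m + (t + t') * s : ℤ) : ZMod (p ^ k)) = 0 := by
      simp only [φ] at h
      push_cast
      linear_combination h
    have := (hu2 (t + t')).mul_left_eq_zero.1 h1
    exact sub_eq_zero.1 this
  obtain ⟨t, ht⟩ := Finite.surjective_of_injective hinj a
  obtain ⟨t, rfl⟩ := ZMod.intCast_surjective t
  obtain ⟨w, hw⟩ := (hu2 (2 * t)).exists_left_inv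
  obtain ⟨w, rfl⟩ := ZMod.intCast_surjective w
  refine ⟨t, w, ?_, ?_⟩
  · push_cast; exact ht
  · rw [Int.cast_mul]; exact hw

/-- `B` as a bilinear map. -/
def BL (n : ℕ) : (Fin (n + 1) → ℤ) →ₗ[ℤ] (Fin (n + 1) → ℤ) →ₗ[ℤ] ℤ :=
  LinearMap.mk₂ ℤ B
    (by intro a b c; simp only [B, Pi.add_apply, add_mul, Finset.sum_add_distrib]; ring)
    (by intro a b c; simp only [B, Pi.smul_apply, smul_eq_mul, mul_assoc, ← Finset.mul_sum]; ring)
    (by intro a b c; simp only [B, Pi.add_apply, mul_add, Finset.sum_add_distrib]; ring)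
    (by intro a b c
        simp only [B, Pi.smul_apply, smul_eq_mul, mul_left_comm _ a, ← Finset.mul_sum]; ring)

lemma BL_apply (n : ℕ) (x y : Fin (n + 1) → ℤ) : BL n x y = B x y := rfl

lemma B_comm {n : ℕ} (x y : Fin (n + 1) → ℤ) : B x y = B y x := by
  simp only [B, mul_comm]

lemma B_even {n : ℕ} (x : En n) : ∃ t : ℤ, B (x : Fin (n + 1) → ℤ) x = 2 * t := by
  obtain ⟨x, hx⟩ := x
  change B x (kv n) = 0 at hx
  change (2 : ℤ) ∣ B x x
  have h : B x x = B x x - B x (kv n) := by rw [hx, sub_zero]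
  have h2 : B x x - B x (kv n) =
      x 0 * (x 0 + 1) + 2 * x 0 - ∑ i : Fin n, x i.succ * (x i.succ - 1) := by
    simp only [B, kv, mul_sub, Finset.sum_sub_distrib]
    simp [Fin.succ_ne_zero]
    ring
  rw [h, h2]
  refine dvd_sub (dvd_add (Int.even_mul_succ_self _).two_dvd (dvd_mul_right _ _)) ?_
  exact Finset.dvd_sum fun i _ => (Int.even_mul_pred_self _).two_dvd


/-- if `M ⊆ E₁₀/p^kE₁₀` contains a submodule isomorphic to `(ℤ/p^kℤ)^8`,
then for every unit `a` of `ℤ/p^kℤ` there are `x, y ∈ E₁₀` with images in `M`,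
`(1/2)⟨x,x⟩ ≡ a` and `⟨x,y⟩ ≡ 1 (mod p^k)`. -/
theorem represents_all_units_with_companion (p : ℕ) (hp : p.Prime) (k : ℕ) (hk : 1 ≤ k)
    (M : Submodule ℤ ((En 10) ⧸ mE (p ^ k)))
    (f : (Fin 8 → ZMod (p ^ k)) →ₗ[ℤ] (En 10) ⧸ mE (p ^ k))
    (hf : Function.Injective f)
    (hfM : LinearMap.range f ≤ M)
    (a : (ZMod (p ^ k))ˣ) :
    ∃ x y : En 10,
      (Submodule.Quotient.mk x : (En 10) ⧸ mE (p ^ k)) ∈ M ∧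
      (Submodule.Quotient.mk y : (En 10) ⧸ mE (p ^ k)) ∈ M ∧
      (∃ t : ℤ, B (x : Fin 11 → ℤ) (x : Fin 11 → ℤ) = 2 * t ∧
        (t : ZMod (p ^ k)) = (a : ZMod (p ^ k))) ∧
      ((B (x : Fin 11 → ℤ) (y : Fin 11 → ℤ) : ℤ) : ZMod (p ^ k)) = 1 := by
  classical
  haveI : Fact p.Prime := ⟨hp⟩
  have hx : ∀ i : Fin 8, ∃ x : En 10,
      (Submodule.Quotient.mk x : (En 10) ⧸ mE (p ^ k)) = f (Pi.single i 1) :=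
    fun i => Submodule.Quotient.mk_surjective _ _
  choose x hx using hx
  have hmk : ∀ c : Fin 8 → ℤ, (Submodule.Quotient.mk (∑ i, c i • x i) : (En 10) ⧸ mE (p ^ k)) =
      f (fun i => (c i : ZMod (p ^ k))) := by
    intro c
    have h1 : (fun i => (c i : ZMod (p ^ k))) =
        ∑ i, c i • (Pi.single i 1 : Fin 8 → ZMod (p ^ k)) := by
      ext j
      simp [Finset.sum_apply, Pi.single_apply]
    rw [h1, map_sum, ← Submodule.mkQ_apply, map_sum]
    refine Finset.sum_congr rfl fun i _ => ?_
    rw [map_smul, map_smul, ← hx i]; rfl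
  have hmkM : ∀ c : Fin 8 → ℤ,
      (Submodule.Quotient.mk (∑ i, c i • x i) : (En 10) ⧸ mE (p ^ k)) ∈ M := by
    intro c
    rw [hmk c]
    exact hfM ⟨_, rfl⟩
  -- independence mod p
  have hind : ∀ c : Fin 8 → ℤ, (∀ j, (p : ℤ) ∣ ((∑ i, c i • x i : En 10) : Fin 11 → ℤ) j) →
      ∀ i, (p : ℤ) ∣ c i := by
    intro c hc
    choose z hz using hc
    have hpz : (p : ℤ) ≠ 0 := by exact_mod_cast hp.ne_zero
    have hz' : ((∑ i, c i • x i : En 10) : Fin 11 → ℤ) = (p : ℤ) • z := by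
      ext j; rw [hz j]; rfl
    have hzE : z ∈ En 10 := by
      have h1 : BL 10 ((∑ i, c i • x i : En 10) : Fin 11 → ℤ) (kv 10) = 0 :=
        (∑ i, c i • x i : En 10).2
      rw [hz', map_smul, LinearMap.smul_apply, smul_eq_mul] at h1
      exact (mul_eq_zero.1 h1).resolve_left hpz
    have h2 := hmk (fun i => (p : ℤ) ^ (k - 1) * c i)
    have h3 : (Submodule.Quotient.mk (∑ i, ((p : ℤ) ^ (k - 1) * c i) • x i) :
        (En 10) ⧸ mE (p ^ k)) = 0 := by
      rw [Submodule.Quotient.mk_eq_zero]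
      refine ⟨⟨z, hzE⟩, ?_⟩
      simp only [mul_smul, ← Finset.smul_sum]
      have h4 : (∑ i, c i • x i : En 10) = (p : ℤ) • (⟨z, hzE⟩ : En 10) := Subtype.ext hz'
      rw [h4, smul_smul, ← pow_succ, Nat.sub_add_cancel hk, LinearMap.smul_apply, LinearMap.id_apply,
        Nat.cast_pow]
    rw [h3] at h2
    have h5 := hf (h2.symm.trans (map_zero f).symm)
    intro i
    have h6 := congrFun h5 i
    simp only [Pi.zero_apply] at h6
    rw [ZMod.intCast_zmod_eq_zero_iff_dvd] at h6
    have h7 : ((p ^ k : ℕ) : ℤ) = (p : ℤ) ^ (k - 1) * p := by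
      rw [← pow_succ, Nat.sub_add_cancel hk]; push_cast; rfl
    rw [h7] at h6
    exact (mul_dvd_mul_iff_left (pow_ne_zero _ hpz)).1 h6
  -- half Gram matrix
  choose h hh using fun i => B_even (x i)
  let A : Matrix (Fin 8) (Fin 8) ℤ := fun i j =>
    if i = j then h i else if i < j then B (x i : Fin 11 → ℤ) (x j) else 0
  have hA : ∀ i j, B (x i : Fin 11 → ℤ) (x j) = A i j + A j i := by
    intro i j
    simp only [A]
    rcases lt_trichotomy i j with hij | rfl | hij
    · simp [hij, hij.ne, hij.ne', hij.not_gt]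
    · simp [hh i]; ring
    · simp [hij, hij.ne, hij.ne', hij.not_gt, B_comm (x i : Fin 11 → ℤ)]
  have hBsum : ∀ c d : Fin 8 → ℤ, B ((∑ i, c i • x i : En 10) : Fin 11 → ℤ)
      ((∑ i, d i • x i : En 10) : Fin 11 → ℤ) =
      ∑ i, ∑ j, c i * d j * B (x i : Fin 11 → ℤ) (x j) := by
    intro c d
    rw [← BL_apply]
    simp only [Submodule.coe_sum, Submodule.coe_smul, map_sum, map_smul, LinearMap.sum_apply,
      LinearMap.smul_apply, BL_apply, smul_eq_mul, Finset.mul_sum]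
    rw [Finset.sum_comm]
    refine Finset.sum_congr rfl fun i _ => Finset.sum_congr rfl fun j _ => ?_
    ring
  let X : Matrix (Fin 8) (Fin 11) (ZMod p) := fun i j => (((x i : Fin 11 → ℤ) j : ℤ) : ZMod p)
  let d : Fin 11 → ZMod p := fun j => if j = 0 then 1 else -1
  have hG : ∀ i j, (X * Matrix.diagonal d * X.transpose) i j =
      ((B (x i : Fin 11 → ℤ) (x j) : ℤ) : ZMod p) := by
    intro i j
    rw [Matrix.mul_apply]
    simp only [Matrix.mul_diagonal, Matrix.transpose_apply]
    rw [Fin.sum_univ_succ]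
    simp [X, d, B, Fin.succ_ne_zero, sub_eq_add_neg]
  have hrank := rank_gram X d (by intro i; simp only [d]; split_ifs <;> simp) (by
    intro c hc
    choose c' hc' using fun i => ZMod.intCast_surjective (c i)
    have := hind c' (by
      intro j
      rw [← ZMod.intCast_zmod_eq_zero_iff_dvd]
      have h1 := congrFun hc j
      simp only [Matrix.vecMul, dotProduct, X, ← hc'] at h1
      simpa [Submodule.coe_sum, Finset.sum_apply] using h1)
    ext i
    rw [← hc' i]
    simpa using (ZMod.intCast_zmod_eq_zero_iff_dvd _ _).2 (this i))
  obtain ⟨u, hu0, hu1⟩ := exists_isotropic_s2 (A.map (Int.cast : ℤ → ZMod p)) _ hrank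
  obtain ⟨j, hj⟩ := Function.ne_iff.1 hu1
  choose c hc using fun i => ZMod.intCast_surjective (u i)
  -- integer data
  let U : En 10 := ∑ i, c i • x i
  let s : ℤ := ∑ i, ∑ j, c i * c j * A i j
  have hUU : B (U : Fin 11 → ℤ) U = 2 * s := by
    simp only [U]
    rw [hBsum]
    simp only [hA, mul_add, Finset.sum_add_distrib, s]
    rw [two_mul]
    congr 1
    rw [Finset.sum_comm]
    refine Finset.sum_congr rfl fun i _ => Finset.sum_congr rfl fun j _ => ?_
    ring
  have hs : (p : ℤ) ∣ s := by
    rw [← ZMod.intCast_zmod_eq_zero_iff_dvd, ← hu0]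
    simp only [s, dotProduct, Matrix.mulVec, Matrix.map_apply, ← hc, Finset.mul_sum]
    push_cast
    refine Finset.sum_congr rfl fun i _ => Finset.sum_congr rfl fun j _ => ?_
    ring
  have hm : ¬ (p : ℤ) ∣ B (U : Fin 11 → ℤ) (x j) := by
    rw [← ZMod.intCast_zmod_eq_zero_iff_dvd]
    intro h0
    apply hj
    rw [Pi.zero_apply, ← h0, B_comm, ← BL_apply]
    simp only [U, Submodule.coe_sum, Submodule.coe_smul, map_sum, map_smul, BL_apply]
    simp only [Matrix.mulVec, dotProduct, hG, ← hc]
    push_cast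
    refine Finset.sum_congr rfl fun i _ => ?_
    simp [mul_comm]
  obtain ⟨t, w, ht, hw⟩ := solve_core p hp k hk (h j) s _ hs hm (a : ZMod (p ^ k))
  have hUM : (Submodule.Quotient.mk U : (En 10) ⧸ mE (p ^ k)) ∈ M := hmkM c
  have hxM : (Submodule.Quotient.mk (x j) : (En 10) ⧸ mE (p ^ k)) ∈ M := by
    rw [hx j]; exact hfM ⟨_, rfl⟩
  refine ⟨x j + t • U, w • U, ?_, ?_, ⟨_, ?_, ht⟩, ?_⟩
  · rw [Submodule.Quotient.mk_add, Submodule.Quotient.mk_smul]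
    exact M.add_mem hxM (M.smul_mem _ hUM)
  · rw [Submodule.Quotient.mk_smul]
    exact M.smul_mem _ hUM
  · rw [← BL_apply]
    simp only [Submodule.coe_add, Submodule.coe_smul, map_add, map_smul, LinearMap.add_apply,
      LinearMap.smul_apply, BL_apply, smul_eq_mul]
    rw [hUU, hh, B_comm (x j : Fin 11 → ℤ)]
    ring
  · rw [← hw, ← BL_apply]
    congr 1
    simp only [Submodule.coe_add, Submodule.coe_smul, map_add, map_smul, LinearMap.add_apply,
      LinearMap.smul_apply, BL_apply, smul_eq_mul]
    rw [hUU, B_comm (x j : Fin 11 → ℤ)]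
    ring
end
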